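/- (Main stability theorem.) Let n, p be positive integers, L, M real n×n matrices, α > 0, and set A := −((L + αM) ⊗ I_p) ∈ ℝ^{np×np}. Let μ := λ_max((A + Aᵀ)/2) and assume μ < 0. Let ḡ ≥ 0, c_r ≥ 0, let e : ℝ → ℝ^{np} and e_L : ℝ → ℝᵖ be continuous with ‖e(t)‖ ≤ √n·ḡ and ‖e_L(t)‖ ≤ ḡ for all t ≥ 0, let x_L : ℝ → ℝᵖ be differentiable with ‖ẋ_L(t)‖ ≤ c_r for all t ≥ 0, and let δ : ℝ → ℝ^{np} be differentiable and satisfy δ̇(t) = A δ(t) + A e(t) + (αM ⊗ I_p)(𝟙_n ⊗ e_L(t)) − 𝟙_n ⊗ ẋ_L(t) for all t ≥ 0. Then for all t ≥ 0, ‖δ(t)‖ ≤ ‖δ(0)‖·e^{μt} + ((√n·‖A‖ + α·‖M·𝟙_n‖)·ḡ + √n·c_r)·(1 − e^{μt})/(−μ), where ‖A‖ is the spectral norm of A and all vector norms are Euclidean. -/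

import Mathlib

open Matrix
open scoped Kronecker

/-- The Euclidean norm of a finitely-indexed real vector. -/
noncomputable def eNorm {ι : Type*} [Fintype ι] (x : ι → ℝ) : ℝ :=
  ‖(EuclideanSpace.equiv ι ℝ).symm x‖

/-- The spectral norm of a real matrix: its operator norm as a linear map between
Euclidean spaces. -/
noncomputable def specNorm {ι κ : Type*} [Fintype ι] [Fintype κ] [DecidableEq κ]
    (A : Matrix ι κ ℝ) : ℝ :=
  ‖LinearMap.toContinuousLinearMap (Matrix.toEuclideanLin A)‖

/-!
Let `w` collect the sampling errors and the leader velocity, with `‖w‖ ≤ C`. The disagreement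
satisfies `½ d/dt ‖δ‖² = ⟪δ, A δ⟫ + ⟪δ, w⟫ ≤ μ ‖δ‖² + C ‖δ‖`, where `⟪δ, A δ⟫ ≤ μ ‖δ‖²` is the
Rayleigh bound for the symmetric part of `A`. Formally dividing by `‖δ‖` gives the scalar inequality
`d/dt ‖δ‖ ≤ μ ‖δ‖ + C`, whose comparison solution is the claimed bound. To avoid dividing where `δ`
vanishes, `‖δ‖²` is compared with the square of a slightly larger, positive solution.
-/

section Gronwall

open Set Filter Topology

theorem gronwallBound_pos {δ K ε x : ℝ} (hδ : 0 < δ) (hε : 0 ≤ ε) (hx : 0 ≤ x) :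
    0 < gronwallBound δ K ε x := by
  rcases eq_or_ne K 0 with rfl | hK
  · rw [gronwallBound_K0]
    positivity
  have exp_sub_one_div_nonneg : 0 ≤ (Real.exp (K * x) - 1) / K := by
    rcases hK.lt_or_gt with hK | hK
    · exact div_nonneg_of_nonpos
        (sub_nonpos.2 (Real.exp_le_one_iff.2 (mul_nonpos_of_nonpos_of_nonneg hK.le hx))) hK.le
    · exact div_nonneg (sub_nonneg.2 (Real.one_le_exp (by positivity))) hK.le
  simp only [gronwallBound_of_K_ne_0 hK, div_mul_eq_mul_div, mul_div_assoc]
  positivity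

theorem continuous_gronwallBound_initial_forcing (K x : ℝ) :
    Continuous fun q : ℝ × ℝ ↦ gronwallBound q.1 K q.2 x := by
  rcases eq_or_ne K 0 with rfl | hK
  · simp only [gronwallBound_K0]
    fun_prop
  · simp only [gronwallBound_of_K_ne_0 hK]
    fun_prop

theorem gronwallBound_eq_of_ne_zero {K : ℝ} (hK : K ≠ 0) (δ ε x : ℝ) :
    gronwallBound δ K ε x =
      δ * Real.exp (K * x) + ε * ((1 - Real.exp (K * x)) / (-K)) := by
  rw [gronwallBound_of_K_ne_0 hK, ← neg_sub (Real.exp (K * x)) 1, neg_div_neg_eq]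
  ring

variable {E : Type*} [NormedAddCommGroup E] [InnerProductSpace ℝ E]
  {f f' : ℝ → E} {δ K ε a b : ℝ}

theorem norm_le_gronwallBound_of_inner_deriv_right_lt
    (hf : ContinuousOn f (Icc a b)) (hf' : ∀ x ∈ Ico a b, HasDerivWithinAt f (f' x) (Ici x) x)
    (hδ : 0 < δ) (ha : ‖f a‖ ≤ δ) (hε : 0 ≤ ε)
    (bound : ∀ x ∈ Ico a b, f x ≠ 0 → inner ℝ (f x) (f' x) < K * ‖f x‖ ^ 2 + ε * ‖f x‖) :
    ∀ x ∈ Icc a b, ‖f x‖ ≤ gronwallBound δ K ε (x - a) := by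
  have barrier_pos : ∀ x, a ≤ x → 0 < gronwallBound δ K ε (x - a) :=
    fun x hx ↦ gronwallBound_pos hδ hε (sub_nonneg.2 hx)
  intro x hx
  refine (sq_le_sq₀ (norm_nonneg _) (barrier_pos x hx.1).le).1 ?_
  refine image_le_of_deriv_right_lt_deriv_boundary (hf.norm.pow 2)
    (fun y hy ↦ (hf' y hy).norm_sq) ?_
    (fun y ↦ (hasDerivAt_gronwallBound_shift δ K ε y a).pow 2) ?_ hx
  · simp only [Pi.pow_apply, sub_self, gronwallBound_x0]
    gcongr
  · intro y hy sq_norm_eq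
    have norm_eq : ‖f y‖ = gronwallBound δ K ε (y - a) :=
      (sq_eq_sq₀ (norm_nonneg _) (barrier_pos y hy.1).le).1 sq_norm_eq
    have f_ne_zero : f y ≠ 0 := norm_pos_iff.1 (norm_eq ▸ barrier_pos y hy.1)
    have inner_lt := bound y hy f_ne_zero
    rw [← norm_eq]
    linear_combination 2 * inner_lt

theorem norm_le_gronwallBound_of_inner_deriv_right_le
    (hf : ContinuousOn f (Icc a b)) (hf' : ∀ x ∈ Ico a b, HasDerivWithinAt f (f' x) (Ici x) x)
    (ha : ‖f a‖ ≤ δ) (hε : 0 ≤ ε)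
    (bound : ∀ x ∈ Ico a b, inner ℝ (f x) (f' x) ≤ K * ‖f x‖ ^ 2 + ε * ‖f x‖) :
    ∀ x ∈ Icc a b, ‖f x‖ ≤ gronwallBound δ K ε (x - a) := by
  intro x hx
  have perturbed : ∀ r : ℝ, 0 < r → ‖f x‖ ≤ gronwallBound (δ + r) K (ε + r) (x - a) := by
    intro r hr
    refine norm_le_gronwallBound_of_inner_deriv_right_lt hf hf'
      (add_pos_of_nonneg_of_pos ((norm_nonneg _).trans ha) hr) (by linarith) (by positivity)
      (fun y hy f_ne_zero ↦ (bound y hy).trans_lt ?_) x hx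
    gcongr
    exact lt_add_of_pos_right ε hr
  have continuous_perturbation :
      Continuous fun r : ℝ ↦ gronwallBound (δ + r) K (ε + r) (x - a) :=
    (continuous_gronwallBound_initial_forcing K (x - a)).comp
      (by fun_prop : Continuous fun r : ℝ ↦ (δ + r, ε + r))
  have tendsto_perturbation :
      Tendsto (fun r : ℝ ↦ gronwallBound (δ + r) K (ε + r) (x - a)) (𝓝[>] 0)
        (𝓝 (gronwallBound δ K ε (x - a))) :=
    (continuous_perturbation.tendsto' 0 _ (by simp only [add_zero])).mono_left nhdsWithin_le_nhds
  exact ge_of_tendsto tendsto_perturbation (eventually_mem_nhdsWithin.mono perturbed)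

end Gronwall

section LogarithmicNorm

variable {ι : Type*} [Fintype ι] [DecidableEq ι]

open scoped MatrixOrder in
theorem re_star_dotProduct_mulVec_le_iSup_eigenvalues {𝕜 : Type*} [RCLike 𝕜] {S : Matrix ι ι 𝕜}
    (hS : S.IsHermitian) (x : ι → 𝕜) :
    RCLike.re (star x ⬝ᵥ S *ᵥ x) ≤ (⨆ i, hS.eigenvalues i) * RCLike.re (star x ⬝ᵥ x) := by
  set m := ⨆ i, hS.eigenvalues i
  have S_le : S ≤ algebraMap ℝ (Matrix ι ι 𝕜) m := by
    rw [le_algebraMap_iff_spectrum_le hS.isSelfAdjoint, hS.spectrum_real_eq_range_eigenvalues]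
    rintro _ ⟨i, rfl⟩
    exact le_ciSup (Set.finite_range hS.eigenvalues).bddAbove i
  have quadratic_form_nonneg := (Matrix.le_iff.1 S_le).re_dotProduct_nonneg x
  rw [Algebra.algebraMap_eq_smul_one, sub_mulVec, smul_mulVec, one_mulVec, dotProduct_sub,
    dotProduct_smul, map_sub, RCLike.smul_re] at quadratic_form_nonneg
  exact sub_nonneg.1 quadratic_form_nonneg

theorem isHermitian_half_smul_add_transpose {ι : Type*} (A : Matrix ι ι ℝ) :
    (((1 : ℝ) / 2) • (A + Aᵀ)).IsHermitian :=
  (isHermitian_add_transpose_self A).smul (.all _)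

/-- The logarithmic norm of `A` with respect to the Euclidean norm, i.e. the largest eigenvalue of
the symmetric part of `A`. It is `0` when `ι` is empty. -/
noncomputable def logNorm (A : Matrix ι ι ℝ) : ℝ :=
  ⨆ i, (isHermitian_half_smul_add_transpose A).eigenvalues i

theorem dotProduct_mulVec_le_logNorm (A : Matrix ι ι ℝ) (x : ι → ℝ) :
    x ⬝ᵥ A *ᵥ x ≤ logNorm A * (x ⬝ᵥ x) := by
  have transpose_form : x ⬝ᵥ Aᵀ *ᵥ x = x ⬝ᵥ A *ᵥ x := by
    rw [mulVec_transpose, dotProduct_comm, ← dotProduct_mulVec]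
  have symmetric_part_form : x ⬝ᵥ (((1 : ℝ) / 2) • (A + Aᵀ)) *ᵥ x = x ⬝ᵥ A *ᵥ x := by
    rw [smul_mulVec, add_mulVec, dotProduct_smul, dotProduct_add, transpose_form, smul_eq_mul]
    ring
  rw [← symmetric_part_form]
  simpa only [logNorm, star_trivial, RCLike.re_to_real] using
    re_star_dotProduct_mulVec_le_iSup_eigenvalues (isHermitian_half_smul_add_transpose A) x

end LogarithmicNorm

section EuclideanNorm

variable {ι κ : Type*} [Fintype ι] [Fintype κ]

theorem eNorm_nonneg (x : ι → ℝ) : 0 ≤ eNorm x :=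
  norm_nonneg _

theorem eNorm_sq (x : ι → ℝ) : eNorm x ^ 2 = x ⬝ᵥ x := by
  rw [eNorm, EuclideanSpace.norm_sq_eq]
  simp [dotProduct, sq]

theorem eNorm_one : eNorm (1 : ι → ℝ) = √(Fintype.card ι) := by
  simp [eNorm, EuclideanSpace.norm_eq]

theorem eNorm_add_le (x y : ι → ℝ) : eNorm (x + y) ≤ eNorm x + eNorm y := by
  simpa only [eNorm, map_add] using norm_add_le _ _

theorem eNorm_sub_le (x y : ι → ℝ) : eNorm (x - y) ≤ eNorm x + eNorm y := by
  simpa only [eNorm, map_sub] using norm_sub_le _ _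

theorem eNorm_smul (c : ℝ) (x : ι → ℝ) : eNorm (c • x) = |c| * eNorm x := by
  rw [eNorm, map_smul, norm_smul, Real.norm_eq_abs, eNorm]

theorem inner_equiv_symm (x y : ι → ℝ) :
    inner ℝ ((EuclideanSpace.equiv ι ℝ).symm x) ((EuclideanSpace.equiv ι ℝ).symm y) = x ⬝ᵥ y := by
  simp [PiLp.inner_apply, dotProduct, mul_comm]

theorem dotProduct_le_eNorm_mul_eNorm (x y : ι → ℝ) : x ⬝ᵥ y ≤ eNorm x * eNorm y :=
  inner_equiv_symm x y ▸ real_inner_le_norm _ _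

theorem eNorm_mulVec_le [DecidableEq κ] (A : Matrix ι κ ℝ) (x : κ → ℝ) :
    eNorm (A *ᵥ x) ≤ specNorm A * eNorm x :=
  (toEuclideanLin A).toContinuousLinearMap.le_opNorm ((EuclideanSpace.equiv κ ℝ).symm x)

/-- The Kronecker product `x ⊗ y` of two vectors, indexed by pairs like `Matrix.kronecker`. In
particular `kroneckerVec 1 y` stacks copies of `y`. -/
def kroneckerVec {ι κ R : Type*} [Mul R] (x : ι → R) (y : κ → R) : ι × κ → R :=
  fun ij ↦ x ij.1 * y ij.2

theorem one_kroneckerVec {ι κ R : Type*} [MulOneClass R] (y : κ → R) :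
    kroneckerVec (1 : ι → R) y = fun ij ↦ y ij.2 :=
  funext fun _ ↦ one_mul _

theorem kronecker_mulVec_kroneckerVec {ι' κ' R : Type*} [CommSemiring R] (A : Matrix ι' ι R)
    (B : Matrix κ' κ R) (x : ι → R) (y : κ → R) :
    (A ⊗ₖ B) *ᵥ kroneckerVec x y = kroneckerVec (A *ᵥ x) (B *ᵥ y) := by
  ext ij
  simp only [kroneckerVec, mulVec, dotProduct, kroneckerMap_apply, Fintype.sum_prod_type,
    Finset.sum_mul_sum, mul_mul_mul_comm]

theorem eNorm_kroneckerVec (x : ι → ℝ) (y : κ → ℝ) :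
    eNorm (kroneckerVec x y) = eNorm x * eNorm y := by
  rw [← sq_eq_sq₀ (eNorm_nonneg _) (mul_nonneg (eNorm_nonneg _) (eNorm_nonneg _)), mul_pow]
  simp only [eNorm_sq, kroneckerVec, dotProduct, Fintype.sum_prod_type, Finset.sum_mul_sum,
    mul_mul_mul_comm]

end EuclideanNorm

section Consensus

open Set

theorem eNorm_le_gronwallBound_of_linear_ode {ι : Type*} [Fintype ι] [DecidableEq ι]
    {A : Matrix ι ι ℝ} {δ w : ℝ → ι → ℝ} {C : ℝ} (hδ : ContinuousOn δ (Ici 0))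
    (hode : ∀ t, 0 ≤ t → HasDerivWithinAt δ (A *ᵥ δ t + w t) (Ici t) t)
    (hw : ∀ t, 0 ≤ t → eNorm (w t) ≤ C) {t : ℝ} (ht : 0 ≤ t) :
    eNorm (δ t) ≤ gronwallBound (eNorm (δ 0)) (logNorm A) C t := by
  let toEuclidean := (EuclideanSpace.equiv ι ℝ).symm
  have energy_estimate : ∀ s, 0 ≤ s →
      δ s ⬝ᵥ (A *ᵥ δ s + w s) ≤ logNorm A * eNorm (δ s) ^ 2 + C * eNorm (δ s) := fun s hs ↦
    calc δ s ⬝ᵥ (A *ᵥ δ s + w s) = δ s ⬝ᵥ A *ᵥ δ s + δ s ⬝ᵥ w s := dotProduct_add _ _ _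
      _ ≤ logNorm A * (δ s ⬝ᵥ δ s) + eNorm (δ s) * eNorm (w s) :=
        add_le_add (dotProduct_mulVec_le_logNorm A _) (dotProduct_le_eNorm_mul_eNorm _ _)
      _ ≤ logNorm A * eNorm (δ s) ^ 2 + C * eNorm (δ s) := by
        rw [← eNorm_sq, mul_comm (eNorm (δ s)) (eNorm (w s))]
        gcongr
        · exact eNorm_nonneg _
        · exact hw s hs
  have bound := norm_le_gronwallBound_of_inner_deriv_right_le (f := toEuclidean ∘ δ)
    (toEuclidean.continuous.comp_continuousOn (hδ.mono Icc_subset_Ici_self))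
    (fun s hs ↦ toEuclidean.hasFDerivAt.comp_hasDerivWithinAt s (hode s hs.1))
    le_rfl ((eNorm_nonneg _).trans (hw 0 le_rfl))
    (fun s hs ↦ (inner_equiv_symm _ _).trans_le (energy_estimate s hs.1)) t ⟨ht, le_rfl⟩
  rwa [sub_zero] at bound

variable {ι κ : Type*} [Fintype ι] [Fintype κ] [DecidableEq ι] [DecidableEq κ]

theorem eNorm_disturbance_le (A : Matrix (ι × κ) (ι × κ) ℝ) (M : Matrix ι ι ℝ) (α : ℝ)
    {g cr : ℝ} {e : ι × κ → ℝ} {eL vL : κ → ℝ} (he : eNorm e ≤ √(Fintype.card ι) * g)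
    (heL : eNorm eL ≤ g) (hvL : eNorm vL ≤ cr) :
    eNorm (A *ᵥ e + ((α • M) ⊗ₖ (1 : Matrix κ κ ℝ)) *ᵥ kroneckerVec 1 eL - kroneckerVec 1 vL) ≤
      (√(Fintype.card ι) * specNorm A + |α| * eNorm (M *ᵥ 1)) * g + √(Fintype.card ι) * cr := by
  have follower_error : eNorm (A *ᵥ e) ≤ specNorm A * (√(Fintype.card ι) * g) :=
    (eNorm_mulVec_le A e).trans (mul_le_mul_of_nonneg_left he (norm_nonneg _))
  have leader_error : eNorm (((α • M) ⊗ₖ (1 : Matrix κ κ ℝ)) *ᵥ kroneckerVec 1 eL) ≤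
      |α| * eNorm (M *ᵥ 1) * g := by
    rw [kronecker_mulVec_kroneckerVec, one_mulVec, smul_mulVec, eNorm_kroneckerVec, eNorm_smul]
    exact mul_le_mul_of_nonneg_left heL (mul_nonneg (abs_nonneg α) (eNorm_nonneg _))
  have leader_velocity : eNorm (kroneckerVec (1 : ι → ℝ) vL) ≤ √(Fintype.card ι) * cr := by
    rw [eNorm_kroneckerVec, eNorm_one]
    gcongr
  calc
    _ ≤ eNorm (A *ᵥ e) + eNorm (((α • M) ⊗ₖ (1 : Matrix κ κ ℝ)) *ᵥ kroneckerVec 1 eL)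
          + eNorm (kroneckerVec (1 : ι → ℝ) vL) :=
      (eNorm_sub_le _ _).trans (add_le_add_left (eNorm_add_le _ _) _)
    _ ≤ specNorm A * (√(Fintype.card ι) * g) + |α| * eNorm (M *ᵥ 1) * g
          + √(Fintype.card ι) * cr := by gcongr
    _ = _ := by ring

/-- The comparison argument only sees right derivatives, so the sampling errors, and with them the
derivative of `δ`, may jump at the event times. `vL` is the velocity of the leader. -/
theorem event_triggered_consensus_stability_general
    (A : Matrix (ι × κ) (ι × κ) ℝ) (M : Matrix ι ι ℝ) (α : ℝ) {g cr : ℝ}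
    {e : ℝ → ι × κ → ℝ} {eL vL : ℝ → κ → ℝ}
    (he : ∀ t, 0 ≤ t → eNorm (e t) ≤ √(Fintype.card ι) * g)
    (heL : ∀ t, 0 ≤ t → eNorm (eL t) ≤ g) (hvL : ∀ t, 0 ≤ t → eNorm (vL t) ≤ cr)
    {δ : ℝ → ι × κ → ℝ} (hδ : ContinuousOn δ (Ici 0))
    (hode : ∀ t, 0 ≤ t → HasDerivWithinAt δ
      (A *ᵥ δ t + A *ᵥ e t + ((α • M) ⊗ₖ (1 : Matrix κ κ ℝ)) *ᵥ (fun ij ↦ eL t ij.2)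
        - fun ij ↦ vL t ij.2) (Ici t) t)
    {t : ℝ} (ht : 0 ≤ t) :
    eNorm (δ t) ≤ gronwallBound (eNorm (δ 0)) (logNorm A)
      ((√(Fintype.card ι) * specNorm A + |α| * eNorm (M *ᵥ fun _ ↦ 1)) * g
        + √(Fintype.card ι) * cr) t := by
  simp only [← one_kroneckerVec (ι := ι), add_assoc, add_sub_assoc] at hode
  refine eNorm_le_gronwallBound_of_linear_ode hδ hode (fun s hs ↦ ?_) ht
  rw [← add_sub_assoc]
  exact eNorm_disturbance_le A M α (he s hs) (heL s hs) (hvL s hs)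

end Consensus

/-- **Main stability theorem for the event-triggered consensus controller.**
Let `A = -((L + α M) ⊗ I_p)` with logarithmic norm `μ = λ_max ((A + Aᵀ)/2) < 0`.  If the
stacked sampling error `e` is bounded by `√n ⬝ ḡ`, the leader sampling error `e_L` by `ḡ`,
the leader velocity `ẋ_L` by `c_r`, and the disagreement `δ` satisfies the closed-loop
dynamics `δ̇ = A δ + A e + (α M ⊗ I_p)(𝟙ₙ ⊗ e_L) - 𝟙ₙ ⊗ ẋ_L` for `t ≥ 0`, then for all
`t ≥ 0`,
`‖δ t‖ ≤ ‖δ 0‖ e^{μ t} + ((√n ‖A‖ + α ‖M 𝟙ₙ‖) ḡ + √n c_r) (1 - e^{μ t}) / (-μ)`. -/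
theorem event_triggered_consensus_stability
    (n p : ℕ) (hn : 0 < n) (hp : 0 < p)
    (L M : Matrix (Fin n) (Fin n) ℝ) (α : ℝ) (hα : 0 < α)
    (A : Matrix (Fin n × Fin p) (Fin n × Fin p) ℝ)
    (hA : A = -((L + α • M) ⊗ₖ (1 : Matrix (Fin p) (Fin p) ℝ)))
    (hsym : (((1 : ℝ) / 2) • (A + Aᵀ)).IsHermitian)
    (μ : ℝ) (hμ : μ = ⨆ i, hsym.eigenvalues i) (hμneg : μ < 0)
    (g cr : ℝ) (hg : 0 ≤ g) (hcr : 0 ≤ cr)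
    (e : ℝ → (Fin n × Fin p → ℝ)) (eL : ℝ → (Fin p → ℝ))
    (he_cont : Continuous e) (heL_cont : Continuous eL)
    (he : ∀ t, 0 ≤ t → eNorm (e t) ≤ Real.sqrt n * g)
    (heL : ∀ t, 0 ≤ t → eNorm (eL t) ≤ g)
    (xL : ℝ → (Fin p → ℝ)) (hxL : Differentiable ℝ xL)
    (hxL' : ∀ t, 0 ≤ t → eNorm (deriv xL t) ≤ cr)
    (δ : ℝ → (Fin n × Fin p → ℝ)) (hδ : Differentiable ℝ δ)
    (hode : ∀ t, 0 ≤ t → deriv δ t =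
      A.mulVec (δ t) + A.mulVec (e t)
        + ((α • M) ⊗ₖ (1 : Matrix (Fin p) (Fin p) ℝ)).mulVec (fun ij => eL t ij.2)
        - fun ij => deriv xL t ij.2)
    (t : ℝ) (ht : 0 ≤ t) :
    eNorm (δ t) ≤ eNorm (δ 0) * Real.exp (μ * t)
      + ((Real.sqrt n * specNorm A + α * eNorm (M.mulVec fun _ => (1 : ℝ))) * g
          + Real.sqrt n * cr) * ((1 - Real.exp (μ * t)) / (-μ)) := by
  obtain rfl : μ = logNorm A := hμ
  simpa only [gronwallBound_eq_of_ne_zero hμneg.ne, Fintype.card_fin, abs_of_pos hα] using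
    event_triggered_consensus_stability_general A M α (by rwa [Fintype.card_fin]) heL hxL'
      hδ.continuous.continuousOn (fun s hs ↦ hode s hs ▸ (hδ s).hasDerivAt.hasDerivWithinAt) ht
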